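/- Let X be a compact metric space. If f : X → X is a weakly mixing and strongly transitive continuous map, then f is Δ-transitive; equivalently, for every positive integer m and all nonempty open sets U, V₁, …, V_m ⊆ X there exists n ≥ 1 such that U ∩ f⁻ⁿ(V₁) ∩ f⁻²ⁿ(V₂) ∩ … ∩ f⁻ᵐⁿ(V_m) ≠ ∅. -/

import Mathlib

open Set Function

/-- A continuous self-map is topologically transitive if every pair of nonempty
open sets is connected by some positive iterate. -/
def TopTransitive {X : Type*} [TopologicalSpace X] (f : X → X) : Prop :=
  ∀ U V : Set X, IsOpen U → IsOpen V → U.Nonempty → V.Nonempty →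
    ∃ n : ℕ, 0 < n ∧ (f^[n] '' U ∩ V).Nonempty

/-- The map `f^{(∗m)} = f × f² × ⋯ × f^m` acting on `X^m` (coordinates indexed by `Fin m`,
where coordinate `i` is moved by `f^[i+1]`). -/
def starMap {X : Type*} (f : X → X) (m : ℕ) : (Fin m → X) → (Fin m → X) :=
  fun x i => f^[(i : ℕ) + 1] (x i)

/-- `f` is weakly mixing if `f × f` is topologically transitive. -/
def WeaklyMixing {X : Type*} [TopologicalSpace X] (f : X → X) : Prop :=
  TopTransitive (fun p : X × X => (f p.1, f p.2))

/-- `f` is multi-transitive if `f × f² × ⋯ × f^m` is topologically transitive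
for every `m ≥ 1`. -/
def MultiTransitive {X : Type*} [TopologicalSpace X] (f : X → X) : Prop :=
  ∀ m : ℕ, 1 ≤ m → TopTransitive (starMap f m)

/-- `f` is Δ-transitive if for each `m ≥ 1` there is a residual set `Y ⊆ X` such that
for every `x ∈ Y` the diagonal tuple `(x, …, x)` has dense orbit under `f × f² × ⋯ × f^m`. -/
def DeltaTransitive {X : Type*} [TopologicalSpace X] (f : X → X) : Prop :=
  ∀ m : ℕ, 1 ≤ m → ∃ Y : Set X, Y ∈ residual X ∧
    ∀ x ∈ Y, Dense (Set.range fun n : ℕ => (starMap f m)^[n] (fun _ : Fin m => x))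

/-- A set `S ⊆ ℕ` is syndetic if there is `L > 0` with `[n, n+L] ∩ S ≠ ∅` for every `n`. -/
def Syndetic (S : Set ℕ) : Prop :=
  ∃ L : ℕ, 0 < L ∧ ∀ n : ℕ, ∃ k ∈ S, n ≤ k ∧ k ≤ n + L

/-- `N(U,V;f) = {n > 0 : f^n(U) ∩ V ≠ ∅}`. -/
def NSet {X : Type*} (f : X → X) (U V : Set X) : Set ℕ :=
  {n | 0 < n ∧ (f^[n] '' U ∩ V).Nonempty}

/-- `f` is syndetically transitive if `N(U,V;f)` is syndetic for all nonempty open `U, V`. -/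
def SyndeticallyTransitive {X : Type*} [TopologicalSpace X] (f : X → X) : Prop :=
  ∀ U V : Set X, IsOpen U → IsOpen V → U.Nonempty → V.Nonempty → Syndetic (NSet f U V)

/-- `f` is strongly transitive if for every nonempty open `U` there is `M > 0` with
`⋃_{j=1}^M f^j(U) = X`. -/
def StronglyTransitive {X : Type*} [TopologicalSpace X] (f : X → X) : Prop :=
  ∀ U : Set X, IsOpen U → U.Nonempty →
    ∃ M : ℕ, 0 < M ∧ (⋃ j ∈ Finset.Icc 1 M, f^[j] '' U) = Set.univ

/-- `f` is minimal if the only nonempty closed `f`-invariant subset is the whole space. -/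
def MinimalMap {X : Type*} [TopologicalSpace X] (f : X → X) : Prop :=
  ∀ K : Set X, IsClosed K → K.Nonempty → f '' K ⊆ K → K = Set.univ

/-! Weak mixing makes the sets `N(A, B)` a filter base, and strong transitivity makes each of them
syndetic. Since `N(A, f^{-l}(B)) + l ⊆ N(A, B)`, they are then thickly syndetic. Thickly syndetic
sets form a filter that is stable under `n ↦ c * n`, so finitely many conditions
`c i * k ∈ N(A i, B i)` can be met by a single `k`.

The points of `U` visiting the `V i` are found by induction on the number of targets. If
`X = ⋃ j ∈ [1, M], f^j(U)`, shrink the `V i` to open sets `W i` such that, for each `j ≤ M`, some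
`k` sends every `f^{-j}(W i)` into `V i` under `f^{c i * k}`. Writing a point of `W 0` provided by
the induction hypothesis as `f^{c 0 * n}(y)`, all `f^{c i * n}(y)` lie in `W i`; now `y = f^j(z)`
with `z ∈ U` and `j ≤ M`, and the `k` belonging to this `j` makes `n + k` the desired time for `z`.
-/

open Filter

section ThicklySyndetic

/-- The filter of thickly syndetic sets of natural numbers: those in which, for every `L`, the
starting points of blocks `[n, n + L]` of consecutive elements form a syndetic set. -/
def thicklySyndetic : Filter ℕ where
  sets := {S | ∀ L, Syndetic {n | ∀ l ≤ L, n + l ∈ S}}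
  univ_sets _ := ⟨1, one_pos, fun n => ⟨n, fun _ _ => mem_univ _, le_rfl, n.le_succ⟩⟩
  sets_of_superset hS hST L := by
    obtain ⟨M, hM, h⟩ := hS L
    refine ⟨M, hM, fun n => ?_⟩
    obtain ⟨k, hk, hbounds⟩ := h n
    exact ⟨k, fun l hl => hST (hk l hl), hbounds⟩
  inter_sets {S T} hS hT L := by
    obtain ⟨N, hN, hT⟩ := hT L
    obtain ⟨M, -, hS⟩ := hS (L + N)
    refine ⟨M + N, by omega, fun n => ?_⟩
    obtain ⟨a, haS, hna, haM⟩ := hS n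
    obtain ⟨b, hbT, hab, hbN⟩ := hT a
    refine ⟨b, fun l hl => ⟨?_, hbT l hl⟩, by omega, by omega⟩
    have hmem : a + (b - a + l) ∈ S := haS _ (by omega)
    rwa [show a + (b - a + l) = b + l by omega] at hmem

lemma mem_thicklySyndetic {S : Set ℕ} :
    S ∈ thicklySyndetic ↔ ∀ L, Syndetic {n | ∀ l ≤ L, n + l ∈ S} :=
  Iff.rfl

instance thicklySyndetic_neBot : NeBot thicklySyndetic := by
  refine ⟨fun hbot => ?_⟩
  obtain ⟨_, -, h⟩ := mem_thicklySyndetic.1 (empty_mem_iff_bot.2 hbot) 0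
  obtain ⟨k, hk, -⟩ := h 0
  exact hk 0 le_rfl

lemma thicklySyndetic_le_atTop : thicklySyndetic ≤ atTop := by
  refine le_iInf fun a => le_principal_iff.2 (mem_thicklySyndetic.2 fun L => ?_)
  refine ⟨a + 1, a.succ_pos, fun n => ⟨n + a, fun l _ => ?_, by omega, by omega⟩⟩
  exact mem_Ici.2 (by omega)

lemma tendsto_const_mul_thicklySyndetic {c : ℕ} (hc : 0 < c) :
    Tendsto (c * ·) thicklySyndetic thicklySyndetic := by
  refine fun S hS => mem_thicklySyndetic.2 fun L => ?_
  obtain ⟨M, -, hS⟩ := mem_thicklySyndetic.1 hS (c + c * L)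
  refine ⟨M + 1, M.succ_pos, fun n => ?_⟩
  obtain ⟨k, hkS, hnk, hkM⟩ := hS (c * n)
  obtain ⟨q, hkq, hqk⟩ : ∃ q, k ≤ c * q ∧ c * q ≤ k + c :=
    ⟨k / c + 1, (Nat.lt_mul_div_succ k hc).le, by linarith [Nat.mul_div_le k c]⟩
  refine ⟨q, fun l hl => ?_, ?_, ?_⟩
  · have hlL : c * l ≤ c * L := Nat.mul_le_mul_left c hl
    have hmem : k + (c * q - k + c * l) ∈ S := hkS _ (by omega)
    rwa [show k + (c * q - k + c * l) = c * (q + l) by rw [mul_add]; omega] at hmem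
  · exact Nat.le_of_mul_le_mul_left (hnk.trans hkq) hc
  · refine Nat.le_of_mul_le_mul_left ?_ hc
    calc c * q ≤ c * n + M + c := by omega
      _ ≤ c * n + c * M + c := by gcongr; exact Nat.le_mul_of_pos_left M hc
      _ = c * (n + (M + 1)) := by ring

end ThicklySyndetic

section Transitivity

variable {X : Type*} [TopologicalSpace X] {f : X → X}

lemma StronglyTransitive.exists_forall_mem_iterate_image (hst : StronglyTransitive f) {U : Set X}
    (hU : IsOpen U) (hU' : U.Nonempty) : ∃ M, 0 < M ∧ ∀ y, ∃ j, 0 < j ∧ j ≤ M ∧ y ∈ f^[j] '' U := by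
  obtain ⟨M, hM, hcover⟩ := hst U hU hU'
  refine ⟨M, hM, fun y => ?_⟩
  obtain ⟨j, hj, hy⟩ := mem_iUnion₂.1 (hcover.ge (mem_univ y))
  exact ⟨j, (Finset.mem_Icc.1 hj).1, (Finset.mem_Icc.1 hj).2, hy⟩

lemma StronglyTransitive.surjective (hst : StronglyTransitive f) : Surjective f := by
  intro y
  obtain ⟨M, -, h⟩ := hst.exists_forall_mem_iterate_image isOpen_univ ⟨y, mem_univ y⟩
  obtain ⟨j, hj, -, x, -, rfl⟩ := h y
  exact ⟨f^[j - 1] x, by rw [← iterate_succ_apply' f, Nat.succ_eq_add_one, Nat.sub_add_cancel hj]⟩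

lemma StronglyTransitive.syndeticallyTransitive (hst : StronglyTransitive f) :
    SyndeticallyTransitive f := by
  intro U V hU _ hU' hV'
  obtain ⟨M, hM, hcover⟩ := hst.exists_forall_mem_iterate_image hU hU'
  refine ⟨M, hM, fun n => ?_⟩
  obtain ⟨y, hy⟩ := hV'.preimage (hst.surjective.iterate n)
  obtain ⟨j, hj, hjM, x, hx, rfl⟩ := hcover y
  rw [mem_preimage, ← iterate_add_apply] at hy
  exact ⟨n + j, ⟨by omega, _, mem_image_of_mem _ hx, hy⟩, by omega, by omega⟩

lemma SyndeticallyTransitive.preimage_iterate_nonempty (hsynd : SyndeticallyTransitive f)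
    {V : Set X} (hV : IsOpen V) (hV' : V.Nonempty) (n : ℕ) : (f^[n] ⁻¹' V).Nonempty := by
  have : Nonempty X := hV'.to_type
  obtain ⟨_, -, h⟩ := hsynd univ V isOpen_univ hV univ_nonempty hV'
  obtain ⟨k, ⟨-, -, ⟨x, -, rfl⟩, hx⟩, hnk, -⟩ := h n
  exact ⟨f^[k - n] x, by rwa [mem_preimage, ← iterate_add_apply, Nat.add_sub_cancel' hnk]⟩

lemma WeaklyMixing.exists_nSet_subset_inter (hwm : WeaklyMixing f) (hf : Continuous f)
    {A₁ B₁ A₂ B₂ : Set X} (hA₁ : IsOpen A₁) (hB₁ : IsOpen B₁) (hA₂ : IsOpen A₂) (hB₂ : IsOpen B₂)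
    (hA₁' : A₁.Nonempty) (hB₁' : B₁.Nonempty) (hA₂' : A₂.Nonempty) (hB₂' : B₂.Nonempty) :
    ∃ A B : Set X, IsOpen A ∧ IsOpen B ∧ A.Nonempty ∧ B.Nonempty ∧
      NSet f A B ⊆ NSet f A₁ B₁ ∩ NSet f A₂ B₂ := by
  obtain ⟨k, -, -, ⟨⟨a, b⟩, ⟨ha, hb⟩, rfl⟩, hab⟩ := hwm (A₁ ×ˢ B₁) (A₂ ×ˢ B₂)
    (hA₁.prod hB₁) (hA₂.prod hB₂) (hA₁'.prod hB₁') (hA₂'.prod hB₂')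
  change (Prod.map f f)^[k] (a, b) ∈ A₂ ×ˢ B₂ at hab
  rw [Prod.map_iterate] at hab
  refine ⟨A₁ ∩ f^[k] ⁻¹' A₂, B₁ ∩ f^[k] ⁻¹' B₂, hA₁.inter (hA₂.preimage (hf.iterate k)),
    hB₁.inter (hB₂.preimage (hf.iterate k)), ⟨a, ha, hab.1⟩, ⟨b, hb, hab.2⟩, ?_⟩
  rintro n ⟨hn, -, ⟨x, ⟨hxA₁, hxA₂⟩, rfl⟩, hxB₁, hxB₂⟩
  refine ⟨⟨hn, _, mem_image_of_mem _ hxA₁, hxB₁⟩, hn, _, mem_image_of_mem _ hxA₂, ?_⟩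
  rwa [(Commute.iterate_iterate_self f n k).eq]

lemma WeaklyMixing.exists_nSet_subset_add_mem (hwm : WeaklyMixing f) (hf : Continuous f)
    (hsynd : SyndeticallyTransitive f) {A B : Set X} (hA : IsOpen A) (hB : IsOpen B)
    (hA' : A.Nonempty) (hB' : B.Nonempty) (L : ℕ) :
    ∃ A₀ B₀ : Set X, IsOpen A₀ ∧ IsOpen B₀ ∧ A₀.Nonempty ∧ B₀.Nonempty ∧
      NSet f A₀ B₀ ⊆ {n | ∀ l ≤ L, n + l ∈ NSet f A B} := by
  induction L with
  | zero => exact ⟨A, B, hA, hB, hA', hB', fun n hn l hl => by rwa [Nat.le_zero.1 hl]⟩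
  | succ L ih =>
    obtain ⟨A₁, B₁, hA₁, hB₁, hA₁', hB₁', h₁⟩ := ih
    obtain ⟨A₂, B₂, hA₂, hB₂, hA₂', hB₂', h₂⟩ :=
      hwm.exists_nSet_subset_inter hf hA₁ hB₁ hA (hB.preimage (hf.iterate (L + 1))) hA₁' hB₁' hA'
        (hsynd.preimage_iterate_nonempty hB hB' (L + 1))
    refine ⟨A₂, B₂, hA₂, hB₂, hA₂', hB₂', fun n hn l hl => ?_⟩
    obtain ⟨hn₁, hn₀, -, ⟨x, hxA, rfl⟩, hxB⟩ := h₂ hn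
    rcases Nat.le_succ_iff.1 hl with hl | rfl
    · exact h₁ hn₁ l hl
    · rw [mem_preimage, ← iterate_add_apply, add_comm] at hxB
      exact ⟨by omega, _, mem_image_of_mem _ hxA, hxB⟩

lemma WeaklyMixing.nSet_mem_thicklySyndetic (hwm : WeaklyMixing f) (hf : Continuous f)
    (hsynd : SyndeticallyTransitive f) {A B : Set X} (hA : IsOpen A) (hB : IsOpen B)
    (hA' : A.Nonempty) (hB' : B.Nonempty) : NSet f A B ∈ thicklySyndetic := by
  refine mem_thicklySyndetic.2 fun L => ?_
  obtain ⟨A₀, B₀, hA₀, hB₀, hA₀', hB₀', hsub⟩ :=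
    hwm.exists_nSet_subset_add_mem hf hsynd hA hB hA' hB' L
  obtain ⟨M, hM, h⟩ := hsynd A₀ B₀ hA₀ hB₀ hA₀' hB₀'
  refine ⟨M, hM, fun n => ?_⟩
  obtain ⟨k, hk, hbounds⟩ := h n
  exact ⟨k, hsub hk, hbounds⟩

end Transitivity

section MultipleReturns

variable {X : Type*} [TopologicalSpace X] {f : X → X}

lemma WeaklyMixing.exists_le_forall_mul_mem_nSet {ι : Type*} [Finite ι] (hwm : WeaklyMixing f)
    (hf : Continuous f) (hsynd : SyndeticallyTransitive f) {c : ι → ℕ} (hc : ∀ i, 0 < c i)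
    {A B : ι → Set X} (hA : ∀ i, IsOpen (A i)) (hB : ∀ i, IsOpen (B i))
    (hA' : ∀ i, (A i).Nonempty) (hB' : ∀ i, (B i).Nonempty) (j : ℕ) :
    ∃ k, j ≤ k ∧ ∀ i, c i * k ∈ NSet f (A i) (B i) := by
  have hmul : ∀ i, ∀ᶠ k in thicklySyndetic, c i * k ∈ NSet f (A i) (B i) := fun i =>
    (tendsto_const_mul_thicklySyndetic (hc i)).eventually
      (hwm.nSet_mem_thicklySyndetic hf hsynd (hA i) (hB i) (hA' i) (hB' i))
  have hlarge : ∀ᶠ k in thicklySyndetic, j ≤ k := thicklySyndetic_le_atTop (eventually_ge_atTop j)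
  exact (hlarge.and (eventually_all.2 hmul)).exists

lemma WeaklyMixing.exists_shrink_forall_le {ι : Type*} [Finite ι] (hwm : WeaklyMixing f)
    (hf : Continuous f) (hsynd : SyndeticallyTransitive f) {c : ι → ℕ} (hc : ∀ i, 0 < c i)
    {V : ι → Set X} (hV : ∀ i, IsOpen (V i)) (hV' : ∀ i, (V i).Nonempty) (L : ℕ) :
    ∃ W : ι → Set X, (∀ i, IsOpen (W i)) ∧ (∀ i, (W i).Nonempty) ∧
      ∀ j ≤ L, ∃ k, ∀ i, f^[j] ⁻¹' W i ⊆ f^[c i * k] ⁻¹' V i := by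
  induction L with
  | zero => exact ⟨V, hV, hV', fun j hj => ⟨0, fun i => by rw [Nat.le_zero.1 hj, mul_zero]⟩⟩
  | succ L ih =>
    obtain ⟨W, hW, hW', hWV⟩ := ih
    obtain ⟨k, hLk, hk⟩ := hwm.exists_le_forall_mul_mem_nSet hf hsynd hc
      (fun i => (hW i).preimage (hf.iterate (L + 1))) hV
      (fun i => hsynd.preimage_iterate_nonempty (hW i) (hW' i) (L + 1)) hV' (L + 1)
    have hiter (i : ι) (x : X) : f^[c i * k - (L + 1)] (f^[L + 1] x) = f^[c i * k] x := by
      rw [← iterate_add_apply, Nat.sub_add_cancel (hLk.trans (Nat.le_mul_of_pos_left k (hc i)))]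
    refine ⟨fun i => W i ∩ f^[c i * k - (L + 1)] ⁻¹' V i,
      fun i => (hW i).inter ((hV i).preimage (hf.iterate _)), fun i => ?_, fun j hj => ?_⟩
    · obtain ⟨-, -, ⟨x, hxW, rfl⟩, hxV⟩ := hk i
      exact ⟨f^[L + 1] x, hxW, by rwa [mem_preimage, hiter]⟩
    · rcases Nat.le_succ_iff.1 hj with hj | rfl
      · obtain ⟨k', hk'⟩ := hWV j hj
        exact ⟨k', fun i x hx => hk' i hx.1⟩
      · exact ⟨k, fun i x hx => by simpa only [mem_preimage, hiter] using hx.2⟩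

theorem WeaklyMixing.exists_inter_iInter_preimage_nonempty (hwm : WeaklyMixing f)
    (hf : Continuous f) (hst : StronglyTransitive f) {m : ℕ} {c : Fin m → ℕ} (hc : ∀ i, 0 < c i)
    (hmono : StrictMono c) {U : Set X} (hU : IsOpen U) (hU' : U.Nonempty) {V : Fin m → Set X}
    (hV : ∀ i, IsOpen (V i)) (hV' : ∀ i, (V i).Nonempty) :
    ∃ n, 1 ≤ n ∧ (U ∩ ⋂ i, f^[c i * n] ⁻¹' V i).Nonempty := by
  induction m generalizing U with
  | zero => exact ⟨1, le_rfl, by simpa using hU'⟩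
  | succ m ih =>
    obtain ⟨M, -, hcover⟩ := hst.exists_forall_mem_iterate_image hU hU'
    obtain ⟨W, hW, hW', hWV⟩ :=
      hwm.exists_shrink_forall_le hf hst.syndeticallyTransitive hc hV hV' M
    have hlt (i : Fin m) : c 0 < c i.succ := hmono i.succ_pos
    obtain ⟨n, hn, x, hx₀, hx⟩ := ih (c := fun i => c i.succ - c 0)
      (fun i => Nat.sub_pos_of_lt (hlt i))
      (fun i i' h => Nat.sub_lt_sub_right (hlt i).le (hmono (Fin.succ_lt_succ_iff.2 h)))
      (hW 0) (hW' 0) (fun i => hW i.succ) (fun i => hW' i.succ)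
    obtain ⟨y, rfl⟩ := hst.surjective.iterate (c 0 * n) x
    have hy : ∀ i, f^[c i * n] y ∈ W i := by
      refine Fin.cases hx₀ fun i => ?_
      have hyi : f^[(c i.succ - c 0) * n] (f^[c 0 * n] y) ∈ W i.succ := mem_iInter.1 hx i
      rwa [← iterate_add_apply, ← add_mul, Nat.sub_add_cancel (hlt i).le] at hyi
    obtain ⟨j, -, hjM, z, hzU, rfl⟩ := hcover y
    obtain ⟨k, hk⟩ := hWV j hjM
    refine ⟨n + k, by omega, z, hzU, mem_iInter.2 fun i => ?_⟩
    have hzW : f^[c i * n] z ∈ f^[j] ⁻¹' W i := by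
      rw [mem_preimage, (Commute.iterate_iterate_self f j (c i * n)).eq]
      exact hy i
    have hzV : f^[c i * k] (f^[c i * n] z) ∈ V i := hk i hzW
    rwa [← iterate_add_apply, ← mul_add, add_comm k] at hzV

end MultipleReturns

section DeltaTransitive

lemma eventually_residual_denseRange {ι X Y : Type*} [TopologicalSpace X] [TopologicalSpace Y]
    [SecondCountableTopology Y] {T : ι → X → Y} (hT : ∀ n, Continuous (T n))
    (htrans : ∀ U V, IsOpen U → U.Nonempty → IsOpen V → V.Nonempty →
      ∃ n, (U ∩ T n ⁻¹' V).Nonempty) :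
    ∀ᶠ x in residual X, DenseRange fun n => T n x := by
  have hbasis := TopologicalSpace.isBasis_countableBasis Y
  have hvisit : ∀ V ∈ TopologicalSpace.countableBasis Y,
      ∀ᶠ x in residual X, x ∈ ⋃ n, T n ⁻¹' V := by
    intro V hV
    have hV_open := hbasis.isOpen hV
    refine residual_of_dense_open (isOpen_iUnion fun n => hV_open.preimage (hT n))
      (dense_iff_inter_open.2 fun U hU hU' => ?_)
    obtain ⟨n, x, hxU, hxV⟩ :=
      htrans U V hU hU' hV_open (TopologicalSpace.nonempty_of_mem_countableBasis hV)
    exact ⟨x, hxU, mem_iUnion.2 ⟨n, hxV⟩⟩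
  filter_upwards [(eventually_countable_ball (TopologicalSpace.countable_countableBasis Y)).2
    hvisit] with x hx
  refine hbasis.dense_iff.2 fun V hV _ => ?_
  obtain ⟨n, hn⟩ := mem_iUnion.1 (hx V hV)
  exact ⟨T n x, hn, n, rfl⟩

lemma starMap_iterate_apply {X : Type*} (f : X → X) (m n : ℕ) (x : Fin m → X) (i : Fin m) :
    (starMap f m)^[n] x i = f^[((i : ℕ) + 1) * n] (x i) := by
  change (Pi.map fun i : Fin m => f^[(i : ℕ) + 1])^[n] x i = _
  rw [Pi.map_iterate, Pi.map_apply, iterate_mul]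

lemma deltaTransitive_of_inter_iInter_preimage_nonempty {X : Type*} [TopologicalSpace X]
    [SecondCountableTopology X] {f : X → X} (hf : Continuous f)
    (h : ∀ m : ℕ, 1 ≤ m → ∀ U : Set X, IsOpen U → U.Nonempty → ∀ V : Fin m → Set X,
      (∀ i, IsOpen (V i)) → (∀ i, (V i).Nonempty) →
        ∃ n : ℕ, (U ∩ ⋂ i : Fin m, f^[((i : ℕ) + 1) * n] ⁻¹' V i).Nonempty) :
    DeltaTransitive f := by
  refine fun m hm => ⟨_, eventually_residual_denseRange
    (T := fun n x => (starMap f m)^[n] fun _ => x) (fun n => ?_) ?_, fun x hx => hx⟩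
  · refine continuous_pi fun i => ?_
    simpa only [starMap_iterate_apply] using hf.iterate _
  · rintro U O hU hU' hO ⟨p, hp⟩
    obtain ⟨V, hV, hVO⟩ := isOpen_pi_iff'.1 hO p hp
    obtain ⟨n, x, hxU, hxV⟩ := h m hm U hU hU' V (fun i => (hV i).1) fun i => ⟨p i, (hV i).2⟩
    refine ⟨n, x, hxU, hVO fun i _ => ?_⟩
    simpa only [starMap_iterate_apply, mem_preimage] using mem_iInter.1 hxV i

end DeltaTransitive

theorem statement3_general {X : Type*} [TopologicalSpace X] [SecondCountableTopology X]
    {f : X → X} (hf : Continuous f) (hwm : WeaklyMixing f) (hst : StronglyTransitive f) :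
    DeltaTransitive f ∧
      ∀ m : ℕ, ∀ U : Set X, IsOpen U → U.Nonempty →
        ∀ V : Fin m → Set X, (∀ i, IsOpen (V i)) → (∀ i, (V i).Nonempty) →
          ∃ n : ℕ, 1 ≤ n ∧
            (U ∩ ⋂ i : Fin m, f^[((i : ℕ) + 1) * n] ⁻¹' V i).Nonempty := by
  have hopen (m : ℕ) (U : Set X) (hU : IsOpen U) (hU' : U.Nonempty) (V : Fin m → Set X)
      (hV : ∀ i, IsOpen (V i)) (hV' : ∀ i, (V i).Nonempty) :=
    hwm.exists_inter_iInter_preimage_nonempty hf hst (c := fun i : Fin m => (i : ℕ) + 1)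
      (fun i => Nat.succ_pos i) (fun _ _ hlt => Nat.succ_lt_succ hlt) hU hU' hV hV'
  refine ⟨deltaTransitive_of_inter_iInter_preimage_nonempty hf fun m _ U hU hU' V hV hV' => ?_,
    hopen⟩
  obtain ⟨n, -, hn⟩ := hopen m U hU hU' V hV hV'
  exact ⟨n, hn⟩

/-- A weakly mixing and strongly transitive continuous map on a compact
metric space is Δ-transitive; equivalently, for every `m ≥ 1` and nonempty open
`U, V₁, …, V_m` there is `n ≥ 1` with `U ∩ f⁻ⁿ(V₁) ∩ ⋯ ∩ f⁻ᵐⁿ(V_m) ≠ ∅`. -/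
theorem statement3 {X : Type*} [MetricSpace X] [CompactSpace X] (f : X → X)
    (hf : Continuous f) (hwm : WeaklyMixing f) (hst : StronglyTransitive f) :
    DeltaTransitive f ∧
      ∀ m : ℕ, 1 ≤ m → ∀ U : Set X, IsOpen U → U.Nonempty →
        ∀ V : Fin m → Set X, (∀ i, IsOpen (V i)) → (∀ i, (V i).Nonempty) →
          ∃ n : ℕ, 1 ≤ n ∧
            (U ∩ ⋂ i : Fin m, f^[((i : ℕ) + 1) * n] ⁻¹' V i).Nonempty := by
  obtain ⟨hdelta, hopen⟩ := statement3_general hf hwm hst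
  exact ⟨hdelta, fun m _ => hopen m⟩
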